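/- For every integer m ≥ 3 there exist a two-party Bell scenario with finite input sets X, Y and output sets A = B of size m, a distinguished quadruple (a*, b*, x*, y*), and a finite set S_0 of quadruples not containing (a*, b*, x*, y*), such that: (i) every local box vanishing on S_0 satisfies P(a*,b*|x*,y*) = 0; (ii) there exist orthonormal bases {u_{x,a}}_{a∈A} of ℂ^m for each x ∈ X and {v_{y,b}}_{b∈B} of ℂ^m for each y ∈ Y such that the quantum box P(a,b|x,y) = |⟨u_{x,a} ⊗ v_{y,b}, ψ⟩|², with ψ = (1/√m)·Σ_{i=0}^{m−1} |i⟩⊗|i⟩ the maximally entangled state in ℂ^m ⊗ ℂ^m, vanishes on S_0 and has P(a*,b*|x*,y*) = 1/m; and (iii) there exists a no-signaling box vanishing on S_0 with P(a*,b*|x*,y*) = 1. -/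

import Mathlib

/-- A two-party box: nonnegative entries, normalized for every input pair. -/
def IsBox {A B X Y : Type*} [Fintype A] [Fintype B]
    (P : A → B → X → Y → ℝ) : Prop :=
  (∀ a b x y, 0 ≤ P a b x y) ∧ ∀ x y, (∑ a, ∑ b, P a b x y) = 1

/-- The no-signaling conditions: each party's marginal is independent of the
other party's input. -/
def NoSignaling {A B X Y : Type*} [Fintype A] [Fintype B]
    (P : A → B → X → Y → ℝ) : Prop :=
  (∀ a x y y', (∑ b, P a b x y) = ∑ b, P a b x y') ∧
  (∀ b y x x', (∑ a, P a b x y) = ∑ a, P a b x' y)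

/-- A box is local (classical) if it is a finite convex combination of
deterministic boxes. -/
def IsLocal {A B X Y : Type*} [Fintype A] [Fintype B] [DecidableEq A] [DecidableEq B]
    (P : A → B → X → Y → ℝ) : Prop :=
  ∃ (Λ : Type) (s : Finset Λ) (q : Λ → ℝ) (f : Λ → X → A) (g : Λ → Y → B),
    (∀ l ∈ s, 0 ≤ q l) ∧ (∑ l ∈ s, q l = 1) ∧
    ∀ a b x y, P a b x y =
      ∑ l ∈ s, q l * (if a = f l x then 1 else 0) * (if b = g l y then 1 else 0)

/-- A box vanishes on a set of (output, output, input, input) quadruples. -/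
def VanishesOn {A B X Y : Type*} (P : A → B → X → Y → ℝ)
    (S0 : Finset (A × B × X × Y)) : Prop :=
  ∀ t ∈ S0, P t.1 t.2.1 t.2.2.1 t.2.2.2 = 0

noncomputable section

/-- The tensor product of two vectors of `ℂ^m`, realized in `ℂ^m ⊗ ℂ^m ≅ ℂ^{m²}`. -/
def tens {m : ℕ} (v w : EuclideanSpace ℂ (Fin m)) :
    EuclideanSpace ℂ (Fin m × Fin m) :=
  WithLp.toLp 2 fun p => v p.1 * w p.2

/-- The maximally entangled state `(1/√m)·Σ_i |i⟩⊗|i⟩` in `ℂ^m ⊗ ℂ^m`. -/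
def maxEnt (m : ℕ) : EuclideanSpace ℂ (Fin m × Fin m) :=
  WithLp.toLp 2 fun p => if p.1 = p.2 then (((Real.sqrt m)⁻¹ : ℝ) : ℂ) else 0

/-!
Both parties measure the maximally entangled state in the same bases, Bob's complex conjugated, so
that outcomes `u` and `v` occur together with probability `|⟨u, v⟩|² / m`; the forbidden quadruples
are the pairs of orthogonal vectors. A deterministic box avoiding them makes both parties pick the
same vector of each basis, no two of the picked vectors being orthogonal. Thirteen explicit bases of
`ℂ³` admit no such choice containing `z = (0, 0, 1)`. Yet one can keep two vectors of each basis
(in the distinguished basis, `z` twice) so that any two of the kept pairs can be matched without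
matching orthogonal vectors. A shared fair coin selecting a kept vector, flipped on Bob's side
according to these matchings, gives a no-signaling box of Popescu–Rohrlich type which answers
`(z, z)` with certainty.

For `m > 3`, the remaining standard basis vectors are adjoined to every basis. They are orthogonal
to `z`, so no choice containing `z` can use them.
-/

section DeterministicSupport

variable {A B X Y : Type*} [Fintype A] [Fintype B] [DecidableEq A] [DecidableEq B]

theorem IsLocal.exists_deterministic_support {P : A → B → X → Y → ℝ} (hP : IsLocal P)
    {a : A} {b : B} {x : X} {y : Y} (h : P a b x y ≠ 0) :
    ∃ (f : X → A) (g : Y → B), f x = a ∧ g y = b ∧ ∀ x' y', P (f x') (g y') x' y' ≠ 0 := by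
  obtain ⟨Λ, s, q, f, g, hq, -, hP⟩ := hP
  obtain ⟨l, hl, hne⟩ := Finset.exists_ne_zero_of_sum_ne_zero (hP a b x y ▸ h)
  simp only [mul_ite, mul_one, mul_zero, ne_eq, ite_eq_right_iff, Classical.not_imp] at hne
  obtain ⟨rfl, rfl, hql⟩ := hne
  refine ⟨f l, g l, rfl, rfl, fun x' y' => ne_of_gt ?_⟩
  rw [hP]
  refine Finset.sum_pos' (fun i hi => ?_) ⟨l, hl, ?_⟩
  · have := hq i hi
    positivity
  · simpa using (hq l hl).lt_of_ne' hql

end DeterministicSupport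

section PairingBox

variable {A B X Y I : Type*} [DecidableEq A] [DecidableEq B] [Fintype I]

/-- The generalized Popescu–Rohrlich box in which a uniformly random label `i : I` is shared,
Alice answers `s x i` and Bob answers `t y (σ x y i)`. The relabelling `σ x y` may depend on both
inputs, which is what makes the box nonlocal. -/
def pairingBox (s : X → I → A) (t : Y → I → B) (σ : X → Y → Equiv.Perm I) :
    A → B → X → Y → ℝ :=
  fun a b x y => (Fintype.card I : ℝ)⁻¹ * ∑ i, if s x i = a ∧ t y (σ x y i) = b then 1 else 0

variable (s : X → I → A) (t : Y → I → B) (σ : X → Y → Equiv.Perm I)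

theorem pairingBox_ne_zero {s : X → I → A} {t : Y → I → B} {σ : X → Y → Equiv.Perm I}
    {a : A} {b : B} {x : X} {y : Y} (h : pairingBox s t σ a b x y ≠ 0) :
    ∃ i, s x i = a ∧ t y (σ x y i) = b := by
  obtain ⟨i, -, hi⟩ := Finset.exists_ne_zero_of_sum_ne_zero (right_ne_zero_of_mul h)
  exact ⟨i, by simpa using hi⟩

theorem pairingBox_of_forall_eq [Nonempty I] {a : A} {b : B} {x : X} {y : Y}
    (ha : ∀ i, s x i = a) (hb : ∀ i, t y i = b) : pairingBox s t σ a b x y = 1 := by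
  simp [pairingBox, ha, hb]

theorem sum_right_pairingBox [Fintype B] (a : A) (x : X) (y : Y) :
    ∑ b, pairingBox s t σ a b x y =
      (Fintype.card I : ℝ)⁻¹ * ∑ i, if s x i = a then 1 else 0 := by
  simp only [pairingBox, ← Finset.mul_sum]
  rw [Finset.sum_comm]
  simp [ite_and]

theorem sum_left_pairingBox [Fintype A] (b : B) (x : X) (y : Y) :
    ∑ a, pairingBox s t σ a b x y =
      (Fintype.card I : ℝ)⁻¹ * ∑ i, if t y i = b then 1 else 0 := by
  simp only [pairingBox, ← Finset.mul_sum]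
  rw [Finset.sum_comm, ← Equiv.sum_comp (σ x y) fun i => if t y i = b then (1 : ℝ) else 0]
  simp [ite_and]

theorem noSignaling_pairingBox [Fintype A] [Fintype B] : NoSignaling (pairingBox s t σ) := by
  constructor
  · intro a x y y'
    simp only [sum_right_pairingBox]
  · intro b y x x'
    simp only [sum_left_pairingBox]

theorem isBox_pairingBox [Fintype A] [Fintype B] [Nonempty I] : IsBox (pairingBox s t σ) := by
  constructor
  · intro a b x y
    unfold pairingBox
    positivity
  · intro x y
    simp only [sum_right_pairingBox, ← Finset.mul_sum]
    rw [Finset.sum_comm]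
    simp

end PairingBox

section MaximallyEntangled

variable {m : ℕ}

/-- The coordinatewise complex conjugate of a vector of `ℂ^m`: on the maximally entangled state
Bob measures in the conjugates of Alice's bases. -/
def conjVec (v : EuclideanSpace ℂ (Fin m)) : EuclideanSpace ℂ (Fin m) :=
  WithLp.toLp 2 fun i => starRingEnd ℂ (v i)

theorem inner_conjVec (v w : EuclideanSpace ℂ (Fin m)) :
    inner ℂ (conjVec v) (conjVec w) = inner ℂ w v := by
  simp [conjVec, PiLp.inner_apply, mul_comm]

theorem orthonormal_conjVec {ι : Type*} {u : ι → EuclideanSpace ℂ (Fin m)}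
    (hu : Orthonormal ℂ u) : Orthonormal ℂ fun a => conjVec (u a) := by
  classical
  simp only [orthonormal_iff_ite, inner_conjVec] at hu ⊢
  simp [hu, eq_comm]

theorem inner_tens_conjVec_maxEnt (v w : EuclideanSpace ℂ (Fin m)) :
    inner ℂ (tens v (conjVec w)) (maxEnt m) = ((√m)⁻¹ : ℝ) * inner ℂ v w := by
  simp [tens, conjVec, maxEnt, PiLp.inner_apply, Fintype.sum_prod_type, Finset.mul_sum,
    mul_comm]

theorem norm_inner_tens_conjVec_maxEnt_sq (v w : EuclideanSpace ℂ (Fin m)) :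
    ‖(inner ℂ (tens v (conjVec w)) (maxEnt m) : ℂ)‖ ^ 2 = ‖(inner ℂ v w : ℂ)‖ ^ 2 / m := by
  rw [inner_tens_conjVec_maxEnt, norm_mul, mul_pow, Complex.norm_real, norm_inv, inv_pow,
    Real.norm_eq_abs, sq_abs, Real.sq_sqrt m.cast_nonneg, mul_comm, div_eq_mul_inv]

end MaximallyEntangled

section HardyConfiguration

variable {𝕜 A B X Z I E F : Type*} [RCLike 𝕜] [NormedAddCommGroup E] [InnerProductSpace 𝕜 E]
  [NormedAddCommGroup F] [InnerProductSpace 𝕜 F]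

/-- A family `u x` of orthonormal systems, one per context `x`, in which the vector `u x₀ a₀`
belongs to no choice of one vector per context without an orthogonal pair, although it belongs to
a "fractional" one: an `I`-indexed list `s x` of vectors of each context, constant at `x₀`, such
that any two of the lists can be matched without pairing orthogonal vectors. -/
structure IsHardyConfiguration (𝕜 I : Type*) {A X E : Type*} [RCLike 𝕜] [NormedAddCommGroup E]
    [InnerProductSpace 𝕜 E] (u : X → A → E) (x₀ : X) (a₀ : A) : Prop where
  orthonormal : ∀ x, Orthonormal 𝕜 (u x)
  exists_orthogonal : ∀ f : X → A, f x₀ = a₀ → ∃ x y, inner 𝕜 (u x (f x)) (u y (f y)) = 0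
  exists_matching : ∃ s : X → I → A, (∀ i, s x₀ i = a₀) ∧
    ∀ x y, ∃ σ : Equiv.Perm I, ∀ i, inner 𝕜 (u x (s x i)) (u y (s y (σ i))) ≠ 0

theorem IsHardyConfiguration.map {u : X → A → E} {x₀ : X} {a₀ : A}
    (h : IsHardyConfiguration 𝕜 I u x₀ a₀) (φ : E →ₗᵢ[𝕜] F) (eX : Z ≃ X) (eA : B ≃ A) :
    IsHardyConfiguration 𝕜 I (fun z b => φ (u (eX z) (eA b))) (eX.symm x₀) (eA.symm a₀) where
  orthonormal z := ((h.orthonormal (eX z)).comp eA eA.injective).comp_linearIsometry φ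
  exists_orthogonal f hf := by
    obtain ⟨x, y, hxy⟩ := h.exists_orthogonal (fun x => eA (f (eX.symm x))) (by simp [hf])
    exact ⟨eX.symm x, eX.symm y, by simpa using hxy⟩
  exists_matching := by
    obtain ⟨s, hs₀, hs⟩ := h.exists_matching
    exact ⟨fun z i => eA.symm (s (eX z) i), by simpa using hs₀,
      fun z z' => by simpa using hs (eX z) (eX z')⟩

/-- The quadruples at which two parties measuring the same family `u` of bases on the maximally
entangled state never find their outcomes. -/
def orthogonalQuadruples (𝕜 : Type*) {A X E : Type*} [RCLike 𝕜] [NormedAddCommGroup E]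
    [InnerProductSpace 𝕜 E] [Fintype A] [Fintype X] (u : X → A → E) :
    Finset (A × A × X × X) := by
  classical
  exact {t | inner 𝕜 (u t.2.2.1 t.1) (u t.2.2.2 t.2.1) = 0}

variable [Fintype A] [Fintype X]

@[simp]
theorem mem_orthogonalQuadruples {u : X → A → E} {a b : A} {x y : X} :
    (a, b, x, y) ∈ orthogonalQuadruples 𝕜 u ↔ inner 𝕜 (u x a) (u y b) = 0 := by
  simp [orthogonalQuadruples]

variable {u : X → A → E} {x₀ : X} {a₀ : A}

theorem IsHardyConfiguration.notMem_orthogonalQuadruples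
    (h : IsHardyConfiguration 𝕜 I u x₀ a₀) : (a₀, a₀, x₀, x₀) ∉ orthogonalQuadruples 𝕜 u := by
  simpa using (h.orthonormal x₀).ne_zero a₀

theorem IsHardyConfiguration.local_eq_zero [DecidableEq A]
    (h : IsHardyConfiguration 𝕜 I u x₀ a₀) {Q : A → A → X → X → ℝ} (hQ : IsLocal Q)
    (hQu : VanishesOn Q (orthogonalQuadruples 𝕜 u)) : Q a₀ a₀ x₀ x₀ = 0 := by
  by_contra hne
  obtain ⟨f, g, hf, -, hfg⟩ := hQ.exists_deterministic_support hne
  have inner_ne_zero (x y : X) : inner 𝕜 (u x (f x)) (u y (g y)) ≠ 0 := fun h0 =>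
    hfg x y (hQu (f x, g y, x, y) (mem_orthogonalQuadruples.2 h0))
  have hgf : g = f := by
    ext x
    by_contra hx
    exact inner_ne_zero x x ((h.orthonormal x).2 (Ne.symm hx))
  obtain ⟨x, y, hxy⟩ := h.exists_orthogonal f hf
  exact inner_ne_zero x y (hgf ▸ hxy)

theorem IsHardyConfiguration.exists_noSignaling [Finite I] [Nonempty I]
    (h : IsHardyConfiguration 𝕜 I u x₀ a₀) :
    ∃ P : A → A → X → X → ℝ, IsBox P ∧ NoSignaling P ∧
      VanishesOn P (orthogonalQuadruples 𝕜 u) ∧ P a₀ a₀ x₀ x₀ = 1 := by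
  classical
  cases nonempty_fintype I
  obtain ⟨s, hs₀, hs⟩ := h.exists_matching
  choose σ hσ using hs
  refine ⟨pairingBox s s σ, isBox_pairingBox s s σ, noSignaling_pairingBox s s σ, ?_,
    pairingBox_of_forall_eq s s σ hs₀ hs₀⟩
  rintro ⟨a, b, x, y⟩ hab
  by_contra hne
  obtain ⟨i, ha, hb⟩ := pairingBox_ne_zero hne
  exact hσ x y i (by simpa [ha, hb] using hab)

end HardyConfiguration

theorem vanishesOn_quantumBox {X : Type*} [Fintype X] {m : ℕ}
    (u : X → Fin m → EuclideanSpace ℂ (Fin m)) :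
    VanishesOn
      (fun a b x y => ‖(inner ℂ (tens (u x a) (conjVec (u y b))) (maxEnt m) : ℂ)‖ ^ 2)
      (orthogonalQuadruples ℂ u) := by
  rintro ⟨a, b, x, y⟩ hab
  simp [norm_inner_tens_conjVec_maxEnt_sq, mem_orthogonalQuadruples.1 hab]

section BlockExtend

variable {𝕜 A X I ι κ : Type*} [RCLike 𝕜] [Fintype ι] [Fintype κ] [DecidableEq ι]
  [DecidableEq κ]

/-- The family of vectors of `𝕜^ι ⊕ 𝕜^κ` consisting of the given vectors of `𝕜^ι` and the
standard basis of `𝕜^κ`. -/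
def blockExtend (κ : Type*) [DecidableEq κ] (u : A → EuclideanSpace 𝕜 ι) :
    A ⊕ κ → EuclideanSpace 𝕜 (ι ⊕ κ)
  | .inl a => WithLp.toLp 2 (Sum.elim (u a) 0)
  | .inr k => EuclideanSpace.single (.inr k) 1

variable (u v : A → EuclideanSpace 𝕜 ι)

@[simp]
theorem inner_blockExtend_inl_inl (a b : A) :
    inner 𝕜 (blockExtend κ u (.inl a)) (blockExtend κ v (.inl b)) = inner 𝕜 (u a) (v b) := by
  simp [blockExtend, PiLp.inner_apply]

@[simp]
theorem inner_blockExtend_inl_inr (a : A) (k : κ) :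
    inner 𝕜 (blockExtend κ u (.inl a)) (blockExtend κ v (.inr k)) = 0 := by
  simp [blockExtend, EuclideanSpace.inner_single_right]

@[simp]
theorem inner_blockExtend_inr_inl (k : κ) (a : A) :
    inner 𝕜 (blockExtend κ u (.inr k)) (blockExtend κ v (.inl a)) = 0 := by
  simp [blockExtend, EuclideanSpace.inner_single_left]

@[simp]
theorem inner_blockExtend_inr_inr (k l : κ) :
    inner 𝕜 (blockExtend κ u (.inr k)) (blockExtend κ v (.inr l)) = if k = l then 1 else 0 := by
  simp [blockExtend, EuclideanSpace.inner_single_left]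

theorem orthonormal_blockExtend {u : A → EuclideanSpace 𝕜 ι} (hu : Orthonormal 𝕜 u) :
    Orthonormal 𝕜 (blockExtend κ u) := by
  classical
  rw [orthonormal_iff_ite] at hu ⊢
  rintro (a | k) (b | l) <;> simp [hu]

theorem IsHardyConfiguration.blockExtend {u : X → A → EuclideanSpace 𝕜 ι} {x₀ : X} {a₀ : A}
    (h : IsHardyConfiguration 𝕜 I u x₀ a₀) :
    IsHardyConfiguration 𝕜 I (fun x => blockExtend κ (u x)) x₀ (.inl a₀) where
  orthonormal x := orthonormal_blockExtend (h.orthonormal x)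
  exists_orthogonal f hf := by
    by_contra! hne
    have exists_inl (x : X) : ∃ a, f x = .inl a := by
      rcases hfx : f x with a | k
      · exact ⟨a, rfl⟩
      · exact absurd (by simp [hf, hfx]) (hne x₀ x)
    choose f' hf' using exists_inl
    obtain ⟨x, y, hxy⟩ := h.exists_orthogonal f' (Sum.inl_injective ((hf' x₀).symm.trans hf))
    exact hne x y (by simpa [hf'] using hxy)
  exists_matching := by
    obtain ⟨s, hs₀, hs⟩ := h.exists_matching
    exact ⟨fun x i => .inl (s x i), by simpa using hs₀, by simpa using hs⟩

end BlockExtend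

section IntegerVectors

open Matrix

variable {𝕜 A X I ι : Type*} [RCLike 𝕜]

/-- An integer vector, viewed in `𝕜^ι`. -/
def intVec (𝕜 : Type*) [RCLike 𝕜] (v : ι → ℤ) : EuclideanSpace 𝕜 ι :=
  WithLp.toLp 2 fun i => (v i : 𝕜)

@[simp]
theorem intVec_eq_zero {v : ι → ℤ} : intVec 𝕜 v = 0 ↔ v = 0 := by
  simp [intVec, WithLp.ext_iff, funext_iff]

variable [Fintype ι]

@[simp]
theorem inner_intVec (v w : ι → ℤ) : inner 𝕜 (intVec 𝕜 v) (intVec 𝕜 w) = (v ⬝ᵥ w : ℤ) := by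
  simp [intVec, PiLp.inner_apply, dotProduct, mul_comm]

/-- The unit vector of `𝕜^ι` in the direction of an integer vector (`0` for the zero vector). -/
def unitRay (𝕜 : Type*) [RCLike 𝕜] (v : ι → ℤ) : EuclideanSpace 𝕜 ι :=
  (‖intVec 𝕜 v‖ : 𝕜)⁻¹ • intVec 𝕜 v

theorem norm_unitRay {v : ι → ℤ} (hv : v ≠ 0) : ‖unitRay 𝕜 v‖ = 1 :=
  norm_smul_inv_norm (intVec_eq_zero.not.2 hv)

@[simp]
theorem inner_unitRay_eq_zero_iff {v w : ι → ℤ} :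
    inner 𝕜 (unitRay 𝕜 v) (unitRay 𝕜 w) = 0 ↔ v ⬝ᵥ w = 0 := by
  rcases eq_or_ne v 0 with rfl | hv
  · simp [unitRay, inner_smul_left]
  rcases eq_or_ne w 0 with rfl | hw
  · simp [unitRay, inner_smul_right]
  simp [unitRay, inner_smul_left, inner_smul_right, hv, hw]

theorem isHardyConfiguration_unitRay {V : X → A → ι → ℤ} {x₀ : X} {a₀ : A}
    (ne_zero : ∀ x a, V x a ≠ 0) (orthogonal : ∀ x, Pairwise fun a b => V x a ⬝ᵥ V x b = 0)
    (exists_orthogonal : ∀ f : X → A, f x₀ = a₀ → ∃ x y, V x (f x) ⬝ᵥ V y (f y) = 0)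
    (exists_matching : ∃ s : X → I → A, (∀ i, s x₀ i = a₀) ∧
      ∀ x y, ∃ σ : Equiv.Perm I, ∀ i, V x (s x i) ⬝ᵥ V y (s y (σ i)) ≠ 0) :
    IsHardyConfiguration 𝕜 I (fun x a => unitRay 𝕜 (V x a)) x₀ a₀ where
  orthonormal x := ⟨fun a => norm_unitRay (ne_zero x a),
    fun _ _ hab => inner_unitRay_eq_zero_iff.2 (orthogonal x hab)⟩
  exists_orthogonal f hf := by simpa using exists_orthogonal f hf
  exists_matching := by simpa using exists_matching

end IntegerVectors

section ContextTable

open Matrix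

/-- Thirteen orthogonal bases of `ℤ³` (up to scaling). The bases in the second summand come in
pairs exchanged by the reflection `(x, y, z) ↦ (x, -y, z)`, the sign `ε` telling which of the two
is meant. The no-signaling box never answers the last vector of a context. -/
def contextVec : Fin 5 ⊕ ℤˣ × Fin 4 → Fin 3 → Fin 3 → ℤ
  | .inl j =>
    (![![![0, 0, 1], ![1, 0, 0], ![0, 1, 0]],
       ![![0, 1, 1], ![0, 1, -1], ![1, 0, 0]],
       ![![1, 0, -2], ![2, 0, 1], ![0, 1, 0]],
       ![![1, 0, -1], ![1, 0, 1], ![0, 1, 0]],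
       ![![2, 0, -1], ![1, 0, 2], ![0, 1, 0]]] : Fin 5 → Fin 3 → Fin 3 → ℤ) j
  | .inr (ε, j) =>
    (![![![1, -ε, -2], ![1, -ε, 1], ![1, ε, 0]],
       ![![1, -ε, -1], ![0, 1, -ε], ![2, ε, 1]],
       ![![1, ε, 1], ![0, 1, -ε], ![2, -ε, -1]],
       ![![1, ε, 2], ![1, ε, -1], ![1, -ε, 0]]] : Fin 4 → Fin 3 → Fin 3 → ℤ) j

/-- The two vectors of each context among which the no-signaling box chooses, both of them equal to
`(0, 0, 1)` in the distinguished context. -/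
def keptIndex : Fin 5 ⊕ ℤˣ × Fin 4 → Fin 2 → Fin 3
  | .inl 0, _ => 0
  | _, i => i.castSucc

theorem contextVec_ne_zero : ∀ x a, contextVec x a ≠ 0 := by
  decide +kernel

theorem contextVec_pairwise_orthogonal :
    ∀ x, Pairwise fun a b => contextVec x a ⬝ᵥ contextVec x b = 0 := by
  unfold Pairwise
  decide +kernel

-- Two kept pairs of `ℤ³` fail to match only if a vector kept in one context is parallel to the one
-- dropped in the other. This never happens in the table, nor is a kept vector orthogonal to
-- `(0, 0, 1)`.
theorem exists_perm_contextVec_dotProduct_ne_zero :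
    ∀ x y, ∃ σ : Equiv.Perm (Fin 2), ∀ i,
      contextVec x (keptIndex x i) ⬝ᵥ contextVec y (keptIndex y (σ i)) ≠ 0 := by
  decide +kernel

theorem mem_of_dotProduct_eq_zero {ι : Type*} [Fintype ι] {S : Set (ι → ℤ)}
    (hS : ∀ v ∈ S, ∀ w ∈ S, v ⬝ᵥ w ≠ 0) {p q r v w : ι → ℤ} (h : p ∈ S ∨ q ∈ S ∨ r ∈ S)
    (hv : v ∈ S) (hw : w ∈ S) (hqv : q ⬝ᵥ v = 0) (hrw : r ⬝ᵥ w = 0) : p ∈ S := by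
  rcases h with hp | hq | hr
  · exact hp
  · exact absurd hqv (hS q hq v hv)
  · exact absurd hrw (hS r hr w hw)

theorem notMem_of_contextVec_mem {S : Set (Fin 3 → ℤ)} (hS : ∀ v ∈ S, ∀ w ∈ S, v ⬝ᵥ w ≠ 0)
    (hV : ∀ x, contextVec x 0 ∈ S ∨ contextVec x 1 ∈ S ∨ contextVec x 2 ∈ S)
    (hz : ![0, 0, 1] ∈ S) (ε : ℤˣ) : ![0, 1, (ε : ℤ)] ∉ S := by
  intro hu
  -- In each context used below two vectors are already excluded, which forces the third into `S`.
  have h₁ : ![1, (-ε : ℤ), -2] ∈ S := mem_of_dotProduct_eq_zero hS (hV (.inr (ε, 0))) hu hz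
    (by simp [contextVec]) (by simp [contextVec])
  have h₂ : ![1, 0, -2] ∈ S := mem_of_dotProduct_eq_zero hS (hV (.inl 2)) h₁ hz
    (by simp [contextVec]) (by simp [contextVec])
  have h₃ : ![1, (-ε : ℤ), -1] ∈ S := mem_of_dotProduct_eq_zero hS (hV (.inr (ε, 1))) hu h₂
    (by simp [contextVec]) (by simp [contextVec])
  have h₄ : ![1, 0, -1] ∈ S := mem_of_dotProduct_eq_zero hS (hV (.inl 3)) h₃ hz
    (by simp [contextVec]) (by simp [contextVec])
  have h₅ : ![2, (-ε : ℤ), -1] ∈ S :=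
    mem_of_dotProduct_eq_zero hS (or_rotate.2 (hV (.inr (ε, 2)))) h₄ hu
      (by simp [contextVec]) (by simp [contextVec])
  have h₆ : ![2, 0, -1] ∈ S := mem_of_dotProduct_eq_zero hS (hV (.inl 4)) h₅ hz
    (by simp [contextVec]) (by simp [contextVec])
  have h₇ : ![1, (ε : ℤ), 2] ∈ S := mem_of_dotProduct_eq_zero hS (hV (.inr (ε, 3))) hu hz
    (by simp [contextVec]) (by simp [contextVec])
  exact hS _ h₇ _ h₆ (by simp)

theorem exists_contextVec_dotProduct_eq_zero (f : Fin 5 ⊕ ℤˣ × Fin 4 → Fin 3)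
    (hf : f (.inl 0) = 0) : ∃ x y, contextVec x (f x) ⬝ᵥ contextVec y (f y) = 0 := by
  by_contra! hne
  set S := Set.range fun x => contextVec x (f x)
  have hS : ∀ v ∈ S, ∀ w ∈ S, v ⬝ᵥ w ≠ 0 := by
    rintro _ ⟨x, rfl⟩ _ ⟨y, rfl⟩
    exact hne x y
  have hV (x) : contextVec x 0 ∈ S ∨ contextVec x 1 ∈ S ∨ contextVec x 2 ∈ S := by
    have hx : contextVec x (f x) ∈ S := ⟨x, rfl⟩
    generalize f x = a at hx
    fin_cases a <;> simp_all
  have hz : ![0, 0, 1] ∈ S := ⟨.inl 0, by simp [hf, contextVec]⟩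
  have hu := notMem_of_contextVec_mem hS hV hz
  rcases hV (.inl 1) with h | h | h
  · exact hu 1 h
  · exact hu (-1) h
  · exact hS _ h _ hz (by simp [contextVec])

theorem isHardyConfiguration_contextVec (𝕜 : Type*) [RCLike 𝕜] :
    IsHardyConfiguration 𝕜 (Fin 2) (fun x a => unitRay 𝕜 (contextVec x a)) (.inl 0) 0 :=
  isHardyConfiguration_unitRay contextVec_ne_zero contextVec_pairwise_orthogonal
    exists_contextVec_dotProduct_eq_zero
    ⟨keptIndex, fun _ => rfl, exists_perm_contextVec_dotProduct_ne_zero⟩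

theorem exists_isHardyConfiguration (𝕜 : Type*) [RCLike 𝕜] {m : ℕ} (hm : 3 ≤ m) :
    ∃ (n : ℕ) (x₀ : Fin n) (a₀ : Fin m) (u : Fin n → Fin m → EuclideanSpace 𝕜 (Fin m)),
      IsHardyConfiguration 𝕜 (Fin 2) u x₀ a₀ := by
  obtain ⟨k, rfl⟩ := Nat.exists_eq_add_of_le hm
  exact ⟨_, _, _, _, ((isHardyConfiguration_contextVec 𝕜).blockExtend (κ := Fin k)).map
    (LinearIsometryEquiv.piLpCongrLeft 2 𝕜 𝕜 finSumFinEquiv).toLinearIsometry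
    (Fintype.equivFin _).symm finSumFinEquiv.symm⟩

end ContextTable

/-- For every `m ≥ 3` there is a Hardy paradox with `m` outputs per party whose
quantum value on the maximally entangled state is `1/m` but whose no-signaling
value is `1`. -/
theorem hardy_paradox_no_randomness_beyond_2xn :
    ∀ m : ℕ, 3 ≤ m →
      ∃ (nx ny : ℕ) (astar bstar : Fin m) (xstar : Fin nx) (ystar : Fin ny)
        (S0 : Finset (Fin m × Fin m × Fin nx × Fin ny))
        (u : Fin nx → Fin m → EuclideanSpace ℂ (Fin m))
        (v : Fin ny → Fin m → EuclideanSpace ℂ (Fin m)),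
        (astar, bstar, xstar, ystar) ∉ S0 ∧
        (∀ x, Orthonormal ℂ (u x)) ∧
        (∀ y, Orthonormal ℂ (v y)) ∧
        (∀ Q : Fin m → Fin m → Fin nx → Fin ny → ℝ,
          IsBox Q → IsLocal Q → VanishesOn Q S0 → Q astar bstar xstar ystar = 0) ∧
        (VanishesOn
            (fun a b x y => ‖(inner ℂ (tens (u x a) (v y b)) (maxEnt m) : ℂ)‖ ^ 2)
            S0 ∧
          ‖(inner ℂ (tens (u xstar astar) (v ystar bstar)) (maxEnt m) : ℂ)‖ ^ 2 =
            1 / (m : ℝ)) ∧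
        (∃ Pns : Fin m → Fin m → Fin nx → Fin ny → ℝ,
          IsBox Pns ∧ NoSignaling Pns ∧ VanishesOn Pns S0 ∧
          Pns astar bstar xstar ystar = 1) := by
  intro m hm
  obtain ⟨n, x₀, a₀, u, h⟩ := exists_isHardyConfiguration ℂ hm
  refine ⟨n, n, a₀, a₀, x₀, x₀, orthogonalQuadruples ℂ u, u, fun y b => conjVec (u y b),
    h.notMem_orthogonalQuadruples, h.orthonormal, fun y => orthonormal_conjVec (h.orthonormal y),
    fun Q _ hQ hQu => h.local_eq_zero hQ hQu, ⟨vanishesOn_quantumBox u, ?_⟩,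
    h.exists_noSignaling⟩
  simp [norm_inner_tens_conjVec_maxEnt_sq, (h.orthonormal x₀).1 a₀]

end
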